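/- arXiv:1511.00428 — 2 statements merged into one kernel-verified Lean document; each statement's English description precedes it below -/
import Mathlib

section
/- Let R_d ∈ SO(3) be fixed and let K_p = diag(λ₁,λ₂,λ₃) with λ₁,λ₂,λ₃ > 0. Then the function V : SO(3) → ℝ defined by V(R) = trace(K_p(I₃ − R_dᵀR)) satisfies V(R) ≥ 0 for all R ∈ SO(3), and V(R) = 0 if and only if R = R_d. -/
open Matrix

/-- The modified trace error function `V(R) = trace (K_p (I - R_dᵀ R))` on `SO(3)`
(where `K_p = diag (λ₁, λ₂, λ₃)` with positive entries) is nonnegative, and it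
vanishes exactly at `R = R_d`. -/
theorem modified_trace_error_nonneg_and_eq_zero_iff
    (Rd : Matrix (Fin 3) (Fin 3) ℝ) (hRd : Rdᵀ * Rd = 1) (hRdDet : Rd.det = 1)
    (lam : Fin 3 → ℝ) (hlam : ∀ i, 0 < lam i) :
    ∀ R : Matrix (Fin 3) (Fin 3) ℝ, Rᵀ * R = 1 → R.det = 1 →
      (0 ≤ Matrix.trace (Matrix.diagonal lam * (1 - Rdᵀ * R)) ∧
        (Matrix.trace (Matrix.diagonal lam * (1 - Rdᵀ * R)) = 0 ↔ R = Rd)) := by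
  intro R hR _
  have key : Matrix.trace (Matrix.diagonal lam * (1 - Rdᵀ * R))
      = ∑ i, lam i * ((∑ k, (R k i - Rd k i) ^ 2) / 2) := by
    unfold Matrix.trace
    refine Finset.sum_congr rfl fun i _ => ?_
    have h1 := congrFun (congrFun hR i) i
    have h2 := congrFun (congrFun hRd i) i
    simp only [Matrix.mul_apply, Matrix.transpose_apply, Matrix.one_apply_eq,
      Fin.sum_univ_three] at h1 h2
    rw [Matrix.diag_apply, Matrix.diagonal_mul]
    simp only [Matrix.sub_apply, Matrix.mul_apply,
      Matrix.transpose_apply, Matrix.one_apply_eq, Fin.sum_univ_three]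
    congr 1
    linarith
  have hnn : ∀ i, 0 ≤ lam i * ((∑ k, (R k i - Rd k i) ^ 2) / 2) := fun i =>
    mul_nonneg (hlam i).le (div_nonneg (Finset.sum_nonneg fun k _ => sq_nonneg _) (by norm_num))
  rw [key]
  refine ⟨Finset.sum_nonneg fun i _ => hnn i, fun h => ?_, fun h => by simp [h]⟩
  rw [Finset.sum_eq_zero_iff_of_nonneg fun i _ => hnn i] at h
  ext k i
  have h1 : (∑ k, (R k i - Rd k i) ^ 2) = 0 := by
    have := (mul_eq_zero.mp (h i (Finset.mem_univ i))).resolve_left (hlam i).ne'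
    linarith
  rw [Finset.sum_eq_zero_iff_of_nonneg fun k _ => sq_nonneg _] at h1
  exact sub_eq_zero.mp (pow_eq_zero_iff two_ne_zero |>.mp (h1 k (Finset.mem_univ k)))
end

section
/- Let M be a symmetric positive definite 3×3 matrix, K_p = diag(λ₁,λ₂,λ₃) with λᵢ > 0, R_d ∈ SO(3) and ω_d ∈ ℝ³. Then the function H(R_s, ω_s) = trace(K_p(I₃ − R_dᵀR_s)) + ½ e_ωᵀ M e_ω, with e_ω = ω_s − (R_dᵀR_s)ᵀω_d, satisfies H(R_s, ω_s) ≥ 0 for all (R_s, ω_s) ∈ SO(3) × ℝ³, with equality if and only if R_s = R_d and ω_s = ω_d. -/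
open Matrix

/-- The candidate Lyapunov function
`H(R_s, ω_s) = trace (K_p (I - R_dᵀ R_s)) + ½ e_ωᵀ M e_ω`, with
`e_ω = ω_s - (R_dᵀ R_s)ᵀ ω_d`, `M` symmetric positive definite and
`K_p = diag (λ₁, λ₂, λ₃)` with positive entries, is nonnegative on `SO(3) × ℝ³`,
and it vanishes exactly at `(R_d, ω_d)`. -/
theorem lyapunov_function_posdef
    (M : Matrix (Fin 3) (Fin 3) ℝ) (hMsymm : M.IsSymm) (hMpos : M.PosDef)
    (lam : Fin 3 → ℝ) (hlam : ∀ i, 0 < lam i)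
    (Rd : Matrix (Fin 3) (Fin 3) ℝ) (hRd : Rdᵀ * Rd = 1) (hRdDet : Rd.det = 1)
    (ωd : Fin 3 → ℝ) :
    ∀ (Rs : Matrix (Fin 3) (Fin 3) ℝ), Rsᵀ * Rs = 1 → Rs.det = 1 →
      ∀ (ωs : Fin 3 → ℝ),
        (0 ≤ Matrix.trace (Matrix.diagonal lam * (1 - Rdᵀ * Rs)) +
            (1 / 2 : ℝ) *
              ((ωs - (Rdᵀ * Rs)ᵀ *ᵥ ωd) ⬝ᵥ (M *ᵥ (ωs - (Rdᵀ * Rs)ᵀ *ᵥ ωd)))) ∧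
          (Matrix.trace (Matrix.diagonal lam * (1 - Rdᵀ * Rs)) +
              (1 / 2 : ℝ) *
                ((ωs - (Rdᵀ * Rs)ᵀ *ᵥ ωd) ⬝ᵥ (M *ᵥ (ωs - (Rdᵀ * Rs)ᵀ *ᵥ ωd))) = 0 ↔
            Rs = Rd ∧ ωs = ωd) := by
  intro Rs hRs _ ωs
  have hRd' : Rd * Rdᵀ = 1 := mul_eq_one_comm.mp hRd
  obtain ⟨Q, hQ⟩ : ∃ Q, Q = Rdᵀ * Rs := ⟨_, rfl⟩
  have hRsQ : Rs = Rd * Q := by rw [hQ, ← Matrix.mul_assoc, hRd', Matrix.one_mul]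
  have hQQ : Qᵀ * Q = 1 := by
    rw [hQ, Matrix.transpose_mul, Matrix.transpose_transpose, Matrix.mul_assoc,
      ← Matrix.mul_assoc Rd, hRd', Matrix.one_mul, hRs]
  rw [← hQ]
  have hcol : ∀ j, Q 0 j ^ 2 + Q 1 j ^ 2 + Q 2 j ^ 2 = 1 := by
    intro j
    have h := congrFun (congrFun hQQ j) j
    simp only [Matrix.mul_apply, Fin.sum_univ_three, Matrix.transpose_apply,
      Matrix.one_apply_eq] at h
    linarith
  have hle : ∀ j, Q j j ≤ 1 := by
    intro j
    have h := hcol j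
    fin_cases j <;> simp at h ⊢ <;>
      nlinarith [sq_nonneg (Q 0 0), sq_nonneg (Q 1 0), sq_nonneg (Q 2 0), sq_nonneg (Q 0 1),
        sq_nonneg (Q 1 1), sq_nonneg (Q 2 1), sq_nonneg (Q 0 2), sq_nonneg (Q 1 2),
        sq_nonneg (Q 2 2)]
  have htr : Matrix.trace (Matrix.diagonal lam * (1 - Q)) = ∑ i, lam i * (1 - Q i i) := by
    simp [Matrix.trace, Matrix.diagonal_mul]
  have hterm : ∀ i, 0 ≤ lam i * (1 - Q i i) := fun i =>
    mul_nonneg (hlam i).le (sub_nonneg.mpr (hle i))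
  have hV : 0 ≤ ∑ i, lam i * (1 - Q i i) := Finset.sum_nonneg fun i _ => hterm i
  obtain ⟨e, he⟩ : ∃ e, e = ωs - Qᵀ *ᵥ ωd := ⟨_, rfl⟩
  have hpos : e ≠ 0 → 0 < e ⬝ᵥ (M *ᵥ e) := by
    intro h
    simpa using hMpos.dotProduct_mulVec_pos h
  have hK : 0 ≤ e ⬝ᵥ (M *ᵥ e) := by
    by_cases h : e = 0
    · simp [h]
    · exact (hpos h).le
  rw [htr, ← he]
  refine ⟨by linarith, ?_, ?_⟩
  · intro h
    have hV0 : ∑ i, lam i * (1 - Q i i) = 0 := by linarith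
    have hK0 : e ⬝ᵥ (M *ᵥ e) = 0 := by linarith
    have he0 : e = 0 := by
      by_contra hne
      exact (hpos hne).ne' hK0
    have hd : ∀ i, Q i i = 1 := by
      intro i
      have h1 := (Finset.sum_eq_zero_iff_of_nonneg (fun i _ => hterm i)).mp hV0 i
        (Finset.mem_univ i)
      rcases mul_eq_zero.mp h1 with h2 | h2
      · exact absurd h2 (hlam i).ne'
      · linarith
    have hQ1 : Q = 1 := by
      have c0 := hcol 0
      have c1 := hcol 1
      have c2 := hcol 2
      rw [hd 0] at c0
      rw [hd 1] at c1
      rw [hd 2] at c2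
      ext i j
      fin_cases i <;> fin_cases j <;> simp [hd] <;>
        (refine pow_eq_zero_iff (two_ne_zero) |>.mp ?_
         nlinarith [sq_nonneg (Q 1 0), sq_nonneg (Q 2 0), sq_nonneg (Q 0 1),
           sq_nonneg (Q 2 1), sq_nonneg (Q 0 2), sq_nonneg (Q 1 2)])
    refine ⟨by rw [hRsQ, hQ1, Matrix.mul_one], ?_⟩
    rw [hQ1, he0] at he
    simp at he
    exact sub_eq_zero.mp he.symm
  · rintro ⟨h1, h2⟩
    have hQ1 : Q = 1 := by rw [hQ, h1, hRd]
    have he0 : e = 0 := by rw [he, hQ1, h2]; simp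
    simp [he0, hQ1]
end
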